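/- Let T > 0 and m₀ ∈ (0,1]. Then there exists a unique M > 0 satisfying T²M³ + T(2−T)M² + (1−2T)M = m₀, and this solution satisfies M ≤ 1. -/

import Mathlib

/-!
By Descartes' rule of signs a cubic `aX³ + bX² + cX + d` with `d < 0 < a` has at most one positive
root unless `b < 0 < c`. Here `b = T(2 - T)` is negative only for `T > 2` and `c = 1 - 2T` is
positive only for `T < 1/2`, so this exception never occurs. Existence and the comparison with `1`
both come from writing the equation as `(M - 1)(1 + TM)² = m₀ - 1`.
-/

open Polynomial Set

theorem subsingleton_pos_isRoot_of_signVariations_le_one {R : Type*} [CommRing R] [LinearOrder R]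
    [IsStrictOrderedRing R] {p : R[X]} (hp : p ≠ 0) (hsign : p.signVariations ≤ 1) :
    {x | 0 < x ∧ p.IsRoot x}.Subsingleton := by
  rintro x ⟨hx, hpx⟩ y ⟨hy, hpy⟩
  by_contra hxy
  have pair_le_roots : ({x, y} : Multiset R) ≤ p.roots :=
    (Multiset.le_iff_subset (by simpa using hxy)).2 (by simp [hp, hpx.eq_zero, hpy.eq_zero])
  suffices 2 ≤ 1 by omega
  calc 2 = Multiset.countP (0 < ·) {x, y} := by simp [← Multiset.cons_zero, hx, hy]
    _ ≤ p.roots.countP (0 < ·) := Multiset.countP_le_of_le _ pair_le_roots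
    _ ≤ p.signVariations := p.roots_countP_pos_le_signVariations
    _ ≤ 1 := hsign

theorem signVariations_cubic_eq_one {R : Type*} [Semiring R] [LinearOrder R] {P : Cubic R}
    (ha : 0 < P.a) (hbc : 0 ≤ P.b ∨ P.c ≤ 0) (hd : P.d < 0) : P.toPoly.signVariations = 1 := by
  have coeffList_eq : P.toPoly.coeffList = [P.a, P.b, P.c, P.d] := by
    simp [coeffList, Cubic.degree_of_a_ne_zero ha.ne', List.range_succ]
  have signs_eq_one : ∀ s t : SignType, 0 ≤ s ∨ t ≤ 0 →
      (([1, s, t, -1].filter (· ≠ 0)).destutter (· ≠ ·)).length - 1 = 1 := by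
    decide
  simpa [signVariations, coeffList_eq, sign_pos ha, sign_neg hd] using
    signs_eq_one (SignType.sign P.b) (SignType.sign P.c) (by simpa using hbc)

section ConsistencyEquation

variable {R : Type*} [CommRing R]

theorem consistency_eq_iff {T m₀ M : R} :
    T ^ 2 * M ^ 3 + T * (2 - T) * M ^ 2 + (1 - 2 * T) * M = m₀ ↔
      (M - 1) * (1 + T * M) ^ 2 = m₀ - 1 := by
  constructor <;> intro h <;> linear_combination h

variable [LinearOrder R] [IsStrictOrderedRing R]

theorem le_one_iff_of_consistency_eq {T m₀ M : R} (hT : 0 ≤ T) (hM : 0 ≤ M)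
    (h : T ^ 2 * M ^ 3 + T * (2 - T) * M ^ 2 + (1 - 2 * T) * M = m₀) : M ≤ 1 ↔ m₀ ≤ 1 := by
  have hpos : 0 < (1 + T * M) ^ 2 := by positivity
  rw [le_iff_le_iff_lt_iff_lt, ← sub_pos, ← sub_pos (a := m₀), ← consistency_eq_iff.1 h,
    mul_pos_iff_of_pos_right hpos]

theorem subsingleton_pos_consistency_eq {T m₀ : R} (hT : 0 < T) (hm₀ : 0 < m₀) :
    {M : R | 0 < M ∧ T ^ 2 * M ^ 3 + T * (2 - T) * M ^ 2 + (1 - 2 * T) * M = m₀}.Subsingleton := by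
  let P : Cubic R := ⟨T ^ 2, T * (2 - T), 1 - 2 * T, -m₀⟩
  have ha : 0 < P.a := by positivity
  have hbc : 0 ≤ P.b ∨ P.c ≤ 0 := by
    rcases le_total T 2 with hT2 | hT2
    · exact .inl (mul_nonneg hT.le (sub_nonneg.2 hT2))
    · exact .inr (show 1 - 2 * T ≤ 0 by linarith)
  have hd : P.d < 0 := neg_neg_of_pos hm₀
  have hroots := subsingleton_pos_isRoot_of_signVariations_le_one
    (Cubic.ne_zero_of_a_ne_zero ha.ne') (signVariations_cubic_eq_one ha hbc hd).le
  simpa [P, Cubic.toPoly, ← sub_eq_add_neg, sub_eq_zero] using hroots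

theorem exists_pos_consistency_eq {T m₀ : ℝ} (hT : 0 ≤ T) (hm₀ : 0 < m₀) :
    ∃ M : ℝ, 0 < M ∧ T ^ 2 * M ^ 3 + T * (2 - T) * M ^ 2 + (1 - 2 * T) * M = m₀ := by
  let f : ℝ → ℝ := fun M ↦ (M - 1) * (1 + T * M) ^ 2
  have hf : ContinuousOn f (Icc 0 (1 + m₀)) := by fun_prop
  have f_zero_lt : f 0 < m₀ - 1 := by simpa [f] using hm₀
  have lt_f_one_add : m₀ - 1 < f (1 + m₀) :=
    calc m₀ - 1 < m₀ := sub_one_lt m₀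
      _ ≤ m₀ * (1 + T * (1 + m₀)) ^ 2 :=
        le_mul_of_one_le_right hm₀.le (one_le_pow₀ (le_add_of_nonneg_right (by positivity)))
      _ = f (1 + m₀) := by simp [f]
  obtain ⟨M, hM, hfM⟩ := intermediate_value_Ioo (by positivity) hf ⟨f_zero_lt, lt_f_one_add⟩
  exact ⟨M, hM.1, consistency_eq_iff.2 hfM⟩

end ConsistencyEquation

theorem stmt_2_general (T m₀ : ℝ) (hT : 0 < T) (hm₀ : 0 < m₀) :
    (∃! M : ℝ, 0 < M ∧ T ^ 2 * M ^ 3 + T * (2 - T) * M ^ 2 + (1 - 2 * T) * M = m₀) ∧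
    (∀ M : ℝ, 0 < M → T ^ 2 * M ^ 3 + T * (2 - T) * M ^ 2 + (1 - 2 * T) * M = m₀ →
      (M ≤ 1 ↔ m₀ ≤ 1)) := by
  obtain ⟨M, hM⟩ := exists_pos_consistency_eq hT.le hm₀
  exact ⟨⟨M, hM, fun _ hN ↦ subsingleton_pos_consistency_eq hT hm₀ hN hM⟩,
    fun _ hN hNeq ↦ le_one_iff_of_consistency_eq hT.le hN.le hNeq⟩

/-- Let `T > 0` and `m₀ ∈ (0,1]`. Then there exists a unique `M > 0` with
`T²M³ + T(2−T)M² + (1−2T)M = m₀`, and this solution satisfies `M ≤ 1`. -/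
theorem stmt_2 (T m₀ : ℝ) (hT : 0 < T) (hm₀ : m₀ ∈ Set.Ioc (0:ℝ) 1) :
    (∃! M : ℝ, 0 < M ∧ T^2 * M^3 + T*(2 - T) * M^2 + (1 - 2*T) * M = m₀) ∧
    (∀ M : ℝ, 0 < M → T^2 * M^3 + T*(2 - T) * M^2 + (1 - 2*T) * M = m₀ → M ≤ 1) := by
  obtain ⟨hunique, hle⟩ := stmt_2_general T m₀ hT hm₀.1
  exact ⟨hunique, fun M hM hMeq ↦ (hle M hM hMeq).2 hm₀.2⟩
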